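/- arXiv:2111.07399 — 3 statements merged into one kernel-verified Lean document; each statement's English description precedes it below -/
import Mathlib

section
/- Let G be a locally finite graph on ℕ with deg(i) ≥ 1 for all i. Then the structure constants c_{ki} = a_{ki}/deg(i) satisfy sup_i ∑_k |c_{ki}|² ≤ 1; consequently, for all v, w ∈ ℓ²(ℕ) the sequence (v ∘ w) with (v ∘ w)_k = ∑_i v_i w_i a_{ki}/deg(i) is a well-defined element of ℓ²(ℕ) with ‖v ∘ w‖ ≤ ‖v‖ ‖w‖, so every left multiplication L_v : w ↦ v ∘ w is a bounded linear operator on ℓ²(ℕ). -/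
/-!
The pointwise product of two vectors of `ℓ²` lies in `ℓ¹`, by the Cauchy–Schwarz inequality, and a
matrix whose columns `cᵢ` lie in the unit ball of a Banach space maps `ℓ¹` contractively into that
space. Hence `v ∘ w = ∑ᵢ vᵢ wᵢ cᵢ` converges absolutely, is bounded bilinear in `(v, w)`, and may be
computed coordinatewise. For a random walk each `cᵢ` is a probability vector, so its `ℓ²` norm is at
most its `ℓ¹` norm, which is `1`.
-/

noncomputable section
open scoped ENNReal

/-- The real Hilbert space ℓ²(ℕ) of square-summable sequences. -/
abbrev l2 : Type := lp (fun _ : ℕ => ℝ) 2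

/-- The degree of vertex `i` in the graph with adjacency coefficients `a`. -/
def deg (a : ℕ → ℕ → ℝ) (i : ℕ) : ℝ := ∑' k, a k i

open scoped NNReal

section Evolution

variable {ι κ 𝕜 H : Type*} [RCLike 𝕜] [NormedAddCommGroup H] [NormedSpace 𝕜 H]

variable (𝕜) in
/-- The bounded bilinear map `(s, t) ↦ (s * t) • x`, the summand of an evolution product at an index
whose structure vector is `x`. -/
def mulSMulRight (x : H) : 𝕜 →L[𝕜] 𝕜 →L[𝕜] H :=
  (ContinuousLinearMap.toSpanSingleton 𝕜 x).postcomp 𝕜 ∘L ContinuousLinearMap.mul 𝕜 𝕜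

lemma mulSMulRight_apply (x : H) (s t : 𝕜) : mulSMulRight 𝕜 x s t = (s * t) • x := rfl

lemma norm_mulSMulRight_le (x : H) : ‖mulSMulRight 𝕜 x‖ ≤ ‖x‖ :=
  ContinuousLinearMap.opNorm_le_bound₂ _ (norm_nonneg x) fun s t => by
    rw [mulSMulRight_apply, norm_smul, norm_mul, mul_comm, mul_assoc]

variable [CompleteSpace H]

lemma hasSum_dualPairing {E F : ι → Type*} [∀ i, NormedAddCommGroup (E i)]
    [∀ i, NormedSpace 𝕜 (E i)] [∀ i, NormedAddCommGroup (F i)] [∀ i, NormedSpace 𝕜 (F i)]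
    {p q : ℝ≥0∞} [Fact (1 ≤ p)] [Fact (1 ≤ q)] [p.HolderConjugate q]
    (B : (i : ι) → E i →L[𝕜] F i →L[𝕜] H) {K : ℝ≥0} (hB : ∀ i, ‖B i‖ ≤ K)
    (e : lp E p) (f : lp F q) :
    HasSum (fun i => B i (e i) (f i)) (lp.dualPairing p q B hB e f) := by
  have hmem : Memℓp (fun i => B i (e i) (f i)) 1 := (lp.memℓp e).holder 1 (lp.memℓp f) B hB
  have hnorm : Summable fun i => ‖B i (e i) (f i)‖ := by
    simpa using hmem.summable (by simp)
  exact hnorm.of_norm.hasSum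

/-- The product `v ∘ w = ∑ᵢ vᵢ wᵢ cᵢ` of a Hilbert evolution algebra, as a bounded bilinear map. The
structure constants are given by their columns `cᵢ = eᵢ ∘ eᵢ`, which may lie in any Banach space. -/
def evolutionMul (c : ι → H) {K : ℝ≥0} (hc : ∀ i, ‖c i‖ ≤ K) :
    lp (fun _ : ι => 𝕜) 2 →L[𝕜] lp (fun _ : ι => 𝕜) 2 →L[𝕜] H :=
  lp.dualPairing 2 2 (fun i => mulSMulRight 𝕜 (c i)) fun i =>
    (norm_mulSMulRight_le (c i)).trans (hc i)

lemma norm_evolutionMul_le (c : ι → H) {K : ℝ≥0} (hc : ∀ i, ‖c i‖ ≤ K) :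
    ‖evolutionMul (𝕜 := 𝕜) c hc‖ ≤ K :=
  lp.norm_dualPairing _ _

lemma norm_evolutionMul_apply_le (c : ι → H) {K : ℝ≥0} (hc : ∀ i, ‖c i‖ ≤ K)
    (v w : lp (fun _ : ι => 𝕜) 2) : ‖evolutionMul c hc v w‖ ≤ K * ‖v‖ * ‖w‖ :=
  ContinuousLinearMap.le_of_opNorm₂_le_of_le _ (norm_evolutionMul_le c hc) le_rfl le_rfl

lemma hasSum_evolutionMul (c : ι → H) {K : ℝ≥0} (hc : ∀ i, ‖c i‖ ≤ K)
    (v w : lp (fun _ : ι => 𝕜) 2) :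
    HasSum (fun i => (v i * w i) • c i) (evolutionMul c hc v w) :=
  hasSum_dualPairing _ _ v w

lemma hasSum_evolutionMul_coord {E : κ → Type*} [∀ k, NormedAddCommGroup (E k)]
    [∀ k, NormedSpace 𝕜 (E k)] [∀ k, CompleteSpace (E k)] {p : ℝ≥0∞} [Fact (1 ≤ p)]
    (c : ι → lp E p) {K : ℝ≥0} (hc : ∀ i, ‖c i‖ ≤ K) (v w : lp (fun _ : ι => 𝕜) 2) (k : κ) :
    HasSum (fun i => (v i * w i) • c i k) (evolutionMul c hc v w k) := by
  have h := (lp.evalCLM 𝕜 E p k).hasSum (hasSum_evolutionMul c hc v w)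
  simpa [lp.evalCLM] using h

end Evolution

section NonnegSeries

variable {α : Type*} {f : α → ℝ} {s : ℝ}

lemma sq_le_mul_of_nonneg_of_hasSum (hf : ∀ k, 0 ≤ f k) (hs : HasSum f s) (k : α) :
    f k ^ 2 ≤ s * f k := by
  rw [sq]
  exact mul_le_mul_of_nonneg_right (le_hasSum hs k fun j _ => hf j) (hf k)

lemma summable_sq_of_nonneg_of_hasSum (hf : ∀ k, 0 ≤ f k) (hs : HasSum f s) :
    Summable fun k => f k ^ 2 :=
  .of_nonneg_of_le (fun k => sq_nonneg (f k)) (sq_le_mul_of_nonneg_of_hasSum hf hs)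
    (hs.summable.mul_left s)

lemma tsum_sq_le_sq_of_nonneg_of_hasSum (hf : ∀ k, 0 ≤ f k) (hs : HasSum f s) :
    ∑' k, f k ^ 2 ≤ s ^ 2 :=
  calc ∑' k, f k ^ 2
    _ ≤ ∑' k, s * f k := (summable_sq_of_nonneg_of_hasSum hf hs).tsum_le_tsum
        (sq_le_mul_of_nonneg_of_hasSum hf hs) (hs.summable.mul_left s)
    _ = s ^ 2 := by rw [(hs.mul_left s).tsum_eq, sq]

lemma exists_lp_two_norm_le_of_nonneg_of_hasSum (hf : ∀ k, 0 ≤ f k) (hs : HasSum f s) :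
    ∃ g : lp (fun _ : α => ℝ) 2, (∀ k, g k = f k) ∧ ‖g‖ ≤ s := by
  have hmem : Memℓp f 2 := memℓp_gen (by simpa using summable_sq_of_nonneg_of_hasSum hf hs)
  refine ⟨⟨f, hmem⟩, fun k => rfl, lp.norm_le_of_tsum_le (by simp) (hs.nonneg hf) ?_⟩
  simpa using tsum_sq_le_sq_of_nonneg_of_hasSum hf hs

end NonnegSeries

theorem random_walk_evolution_algebra_welldefined_general {V : Type*} {a : V → V → ℝ} {d : V → ℝ}
    (ha : ∀ k i, 0 ≤ a k i) (hd : ∀ i, HasSum (fun k => a k i) (d i)) (hpos : ∀ i, 0 < d i) :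
    (∀ i, ∑' k, |a k i / d i| ^ 2 ≤ 1) ∧
    (∀ v w : lp (fun _ : V => ℝ) 2,
      ∃ u : lp (fun _ : V => ℝ) 2,
        (∀ k, Summable fun i => v i * w i * (a k i / d i)) ∧
        (∀ k, u k = ∑' i, v i * w i * (a k i / d i)) ∧
        ‖u‖ ≤ ‖v‖ * ‖w‖) ∧
    (∀ v : lp (fun _ : V => ℝ) 2, ∃ L : lp (fun _ : V => ℝ) 2 →L[ℝ] lp (fun _ : V => ℝ) 2,
      ∀ (w : lp (fun _ : V => ℝ) 2) (k : V), L w k = ∑' i, v i * w i * (a k i / d i)) := by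
  have hnonneg (i k : V) : 0 ≤ a k i / d i := div_nonneg (ha k i) (hpos i).le
  have hprob (i : V) : HasSum (fun k => a k i / d i) 1 := by
    simpa [(hpos i).ne'] using (hd i).div_const (d i)
  choose c hcoord hnorm using fun i =>
    exists_lp_two_norm_le_of_nonneg_of_hasSum (hnonneg i) (hprob i)
  let mul : lp (fun _ : V => ℝ) 2 →L[ℝ] lp (fun _ : V => ℝ) 2 →L[ℝ] lp (fun _ : V => ℝ) 2 :=
    evolutionMul (K := 1) c hnorm
  have hmul (v w : lp (fun _ : V => ℝ) 2) (k : V) :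
      HasSum (fun i => v i * w i * (a k i / d i)) (mul v w k) := by
    simpa only [smul_eq_mul, hcoord] using hasSum_evolutionMul_coord (K := 1) c hnorm v w k
  have hmul_norm (v w : lp (fun _ : V => ℝ) 2) : ‖mul v w‖ ≤ ‖v‖ * ‖w‖ := by
    simpa using norm_evolutionMul_apply_le (K := 1) c hnorm v w
  refine ⟨fun i => ?_, fun v w => ?_, fun v => ?_⟩
  · simpa using tsum_sq_le_sq_of_nonneg_of_hasSum (hnonneg i) (hprob i)
  · exact ⟨mul v w, fun k => (hmul v w k).summable, fun k => (hmul v w k).tsum_eq.symm,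
      hmul_norm v w⟩
  · exact ⟨mul v, fun w k => (hmul v w k).tsum_eq.symm⟩

/-- for a locally finite simple graph on ℕ with all degrees at least 1, the
random-walk structure constants `c_{ki} = a_{ki}/deg(i)` satisfy `sup_i ∑_k |c_{ki}|² ≤ 1`;
consequently the product `(v ∘ w)_k = ∑_i v_i w_i a_{ki}/deg(i)` of any `v, w ∈ ℓ²` is a
well-defined element of `ℓ²` with `‖v ∘ w‖ ≤ ‖v‖ ‖w‖`, and every left multiplication `L_v`
is a bounded linear operator on `ℓ²`. -/
theorem random_walk_evolution_algebra_welldefined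
    (a : ℕ → ℕ → ℝ)
    (hval : ∀ k i, a k i = 0 ∨ a k i = 1)
    (hsym : ∀ k i, a k i = a i k)
    (hloop : ∀ i, a i i = 0)
    (hlf : ∀ i, Summable fun k => a k i)
    (hdeg : ∀ i, 1 ≤ deg a i) :
    (∀ i, ∑' k, |a k i / deg a i| ^ 2 ≤ 1) ∧
    (∀ v w : l2,
      ∃ u : l2,
        (∀ k, Summable fun i => v i * w i * (a k i / deg a i)) ∧
        (∀ k, u k = ∑' i, v i * w i * (a k i / deg a i)) ∧
        ‖u‖ ≤ ‖v‖ * ‖w‖) ∧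
    (∀ v : l2, ∃ L : l2 →L[ℝ] l2,
      ∀ (w : l2) (k : ℕ), L w k = ∑' i, v i * w i * (a k i / deg a i)) :=
  random_walk_evolution_algebra_welldefined_general
    (fun k i => (hval k i).elim (fun h => h.ge) fun h => h ▸ zero_le_one)
    (fun i => (hlf i).hasSum) (fun i => one_pos.trans_le (hdeg i))
end
end

section
/- Let G be a (d₁,d₂)-biregular graph on ℕ: ℕ = V₁ ⊔ V₂, every edge joins V₁ to V₂, deg(i) = d₁ ≥ 1 for i ∈ V₁ and deg(i) = d₂ ≥ 1 for i ∈ V₂. Then the linear map f : ℓ²(ℕ) → ℓ²(ℕ) defined by f(δ_i) = (d₁² d₂)^{1/3} δ_i for i ∈ V₁ and f(δ_i) = (d₁ d₂²)^{1/3} δ_i for i ∈ V₂ is an isomorphism of Hilbert evolution algebras from A(G) to A_RW(G): f is a continuous linear bijection with continuous inverse satisfying f(v ⋆ w) = f(v) ∘ f(w) for all v, w ∈ ℓ²(ℕ). -/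
/-!
The map is a diagonal operator with one value `A` on `V₁` and another value `B` off `V₁`. Comparing
coefficients, a diagonal operator with entries `c i` carries `⋆` to `∘` as soon as
`c i ^ 2 / deg i = c k` along every edge from `i` to `k`. Since edges switch sides, this asks for
`A ^ 2 / d₁ = B` and `B ^ 2 / d₂ = A`, solved by `A = (d₁² d₂)^(1/3)` and `B = (d₁ d₂²)^(1/3)`.

Both products are everywhere defined because the coordinatewise product of two vectors of `ℓ²` lies
in `ℓ¹`, and a matrix with bounded absolute column sums maps `ℓ¹` to `ℓ¹ ⊆ ℓ²`.
-/

noncomputable section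
open scoped ENNReal

/-- `a` is the adjacency function of a simple graph (0/1-valued, symmetric, no loops). -/
def SimpleAdj (a : ℕ → ℕ → ℝ) : Prop :=
  (∀ k i, a k i = 0 ∨ a k i = 1) ∧ (∀ k i, a k i = a i k) ∧ (∀ i, a i i = 0)

/-- The graph is connected: any two vertices are joined by a finite path of edges. -/
def Connected (a : ℕ → ℕ → ℝ) : Prop :=
  ∀ i j : ℕ, Relation.ReflTransGen (fun x y => a x y = 1) i j

/-- The graph is locally finite: every degree series converges. -/
def GraphLocallyFinite (a : ℕ → ℕ → ℝ) : Prop := ∀ i, Summable fun k => a k i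

/-- The graph has uniformly bounded degree. -/
def UnifBoundedDegree (a : ℕ → ℕ → ℝ) : Prop := ∃ M > 0, ∀ i, deg a i ≤ M

/-- The graph is regular: all degrees are equal. -/
def GraphRegular (a : ℕ → ℕ → ℝ) : Prop := ∃ d : ℝ, ∀ i, deg a i = d

/-- The graph is biregular: the vertex set splits as `V₁ ⊔ V₂` with every edge joining `V₁`
to `V₂` and constant degrees `d₁` on `V₁` and `d₂` on `V₂`. -/
def GraphBiregular (a : ℕ → ℕ → ℝ) : Prop :=
  ∃ (V₁ : Set ℕ) (d₁ d₂ : ℝ),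
    (∀ i ∈ V₁, deg a i = d₁) ∧ (∀ i ∉ V₁, deg a i = d₂) ∧
    ∀ i k, a k i = 1 → ((i ∈ V₁ ∧ k ∉ V₁) ∨ (i ∉ V₁ ∧ k ∈ V₁))

/-- `p` is the product `v ⋆ w` in the Hilbert evolution algebra `A(G)`:
`p_k = ∑_i v_i w_i a_{ki}` with all series convergent. -/
def IsStarProd (a : ℕ → ℕ → ℝ) (v w p : l2) : Prop :=
  (∀ k, Summable fun i => v i * w i * a k i) ∧
  ∀ k, p k = ∑' i, v i * w i * a k i

/-- `p` is the product `v ∘ w` in the Hilbert evolution algebra `A_RW(G)`: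
`p_k = ∑_i v_i w_i a_{ki}/deg(i)` with all series convergent. -/
def IsRWProd (a : ℕ → ℕ → ℝ) (v w p : l2) : Prop :=
  (∀ k, Summable fun i => v i * w i * (a k i / deg a i)) ∧
  ∀ k, p k = ∑' i, v i * w i * (a k i / deg a i)

/-- The graph is non-singular: the adjacency operator `(A v)_k = ∑_i a_{ki} v_i` on ℓ²(ℕ)
has trivial kernel. -/
def NonSingular (a : ℕ → ℕ → ℝ) : Prop :=
  ∀ v : l2, (∀ k, ∑' i, a k i * v i = 0) → v = 0

/-- The standard orthonormal basis vector `δ_i` of ℓ²(ℕ). -/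
def delta (i : ℕ) : l2 := lp.single 2 i (1 : ℝ)

open scoped lp

section Diagonal

variable {ι 𝕜 : Type*} [NormedField 𝕜] {E : ι → Type*} [∀ i, NormedAddCommGroup (E i)]
  [∀ i, NormedSpace 𝕜 (E i)] {p : ℝ≥0∞}

lemma norm_smul_apply_le_norm_smul_toNorm (c : ℓ^∞(ι, 𝕜)) (v : lp E p) (i : ι) :
    ‖c i • v i‖ ≤ ‖(‖c‖ • lp.toNorm v) i‖ := by
  rw [lp.coeFn_smul, Pi.smul_apply, norm_smul, norm_smul, lp.toNorm_coe, norm_norm, norm_norm]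
  gcongr
  exact lp.norm_apply_le_norm ENNReal.top_ne_zero c i

variable [Fact (1 ≤ p)]

/-- The diagonal operator on `ℓ^p` with entries `c ∈ ℓ^∞`. -/
def lpDiagonal (c : ℓ^∞(ι, 𝕜)) : lp E p →L[𝕜] lp E p :=
  LinearMap.mkContinuous
    { toFun v := ⟨fun i => c i • v i,
        (lp.memℓp _).mono' (norm_smul_apply_le_norm_smul_toNorm c v)⟩
      map_add' v w := by
        ext i
        exact smul_add (c i) (v i) (w i)
      map_smul' r v := by
        ext i
        exact smul_comm (c i) r (v i) }
    ‖c‖ fun v => by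
      have hp : p ≠ 0 := (zero_lt_one.trans_le Fact.out).ne'
      calc
        _ ≤ ‖‖c‖ • lp.toNorm v‖ := lp.norm_mono hp (norm_smul_apply_le_norm_smul_toNorm c v)
        _ = ‖c‖ * ‖v‖ := by rw [norm_smul, norm_norm, lp.norm_toNorm]

lemma lpDiagonal_apply (c : ℓ^∞(ι, 𝕜)) (v : lp E p) (i : ι) : lpDiagonal c v i = c i • v i :=
  rfl

lemma lpDiagonal_lpDiagonal_of_mul_eq_one {c d : ℓ^∞(ι, 𝕜)} (h : c * d = 1) (v : lp E p) :
    lpDiagonal c (lpDiagonal d v) = v := by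
  ext i
  have hi : c i * d i = 1 := by rw [← Pi.mul_apply, ← lp.infty_coeFn_mul, h]; rfl
  rw [lpDiagonal_apply, lpDiagonal_apply, smul_smul, hi, one_smul]

/-- The invertible diagonal operator on `ℓ^p` with entries a unit of the ring `ℓ^∞`. -/
def lpDiagonalEquiv (c : ℓ^∞(ι, 𝕜)ˣ) : lp E p ≃L[𝕜] lp E p :=
  .equivOfInverse (lpDiagonal c) (lpDiagonal ↑c⁻¹)
    (lpDiagonal_lpDiagonal_of_mul_eq_one c.inv_mul) (lpDiagonal_lpDiagonal_of_mul_eq_one c.mul_inv)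

lemma lpDiagonalEquiv_apply (c : ℓ^∞(ι, 𝕜)ˣ) (v : lp E p) (i : ι) :
    lpDiagonalEquiv c v i = (c : ℓ^∞(ι, 𝕜)) i • v i :=
  rfl

lemma lpDiagonalEquiv_single [DecidableEq ι] (c : ℓ^∞(ι, 𝕜)ˣ) (i : ι) (x : E i) :
    lpDiagonalEquiv c (lp.single p i x) = (c : ℓ^∞(ι, 𝕜)) i • lp.single p i x := by
  ext j
  rw [lpDiagonalEquiv_apply, lp.coeFn_smul, Pi.smul_apply]
  obtain rfl | hj := eq_or_ne j i
  · rfl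
  · rw [lp.single_apply_ne p i x hj, smul_zero, smul_zero]

end Diagonal

section FiniteRange

variable {ι E 𝕜 : Type*} [NormedAddCommGroup E] [NormedField 𝕜]

lemma memℓp_infty_of_finite_range {c : ι → E} (hc : (Set.range c).Finite) : Memℓp c ∞ :=
  memℓp_infty <| by
    rw [← Function.comp_def norm c, Set.range_comp]
    exact (hc.image norm).bddAbove

lemma exists_units_lp_infty_coe_eq {c : ι → 𝕜} (hc : (Set.range c).Finite) (hc₀ : ∀ i, c i ≠ 0) :
    ∃ u : ℓ^∞(ι, 𝕜)ˣ, ⇑(u : ℓ^∞(ι, 𝕜)) = c := by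
  have hinv : (Set.range fun i => (c i)⁻¹).Finite := by
    rw [← Function.comp_def Inv.inv c, Set.range_comp]
    exact hc.image Inv.inv
  exact ⟨.mkOfMulEqOne ⟨c, memℓp_infty_of_finite_range hc⟩ ⟨_, memℓp_infty_of_finite_range hinv⟩
    (lp.ext (funext fun i => mul_inv_cancel₀ (hc₀ i))), rfl⟩

end FiniteRange

section NormedRing

variable {ι κ R : Type*} [NormedRing R]

lemma summable_norm_mul_of_holderConjugate {p q : ℝ≥0∞} (hpq : p.toReal.HolderConjugate q.toReal)
    (v : ℓ^p(ι, R)) (w : ℓ^q(ι, R)) : Summable fun i => ‖v i * w i‖ :=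
  (lp.summable_mul hpq v w).of_nonneg_of_le (fun _ => norm_nonneg _) fun _ => norm_mul_le _ _

lemma summable_mul_of_tsum_norm_le [CompleteSpace R] {b : κ → ι → R} {M : ℝ}
    (hb : ∀ i, Summable fun k => ‖b k i‖) (hM : ∀ i, ∑' k, ‖b k i‖ ≤ M)
    {u : ι → R} (hu : Summable fun i => ‖u i‖) :
    Summable fun x : κ × ι => u x.2 * b x.1 x.2 := by
  have hnonneg : 0 ≤ fun x : ι × κ => ‖u x.1‖ * ‖b x.2 x.1‖ := fun x => by positivity
  have hcolumns : Summable fun i => ∑' k, ‖u i‖ * ‖b k i‖ := by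
    simp only [tsum_mul_left]
    refine (hu.mul_right M).of_nonneg_of_le (fun i => by positivity) fun i => ?_
    gcongr
    exact hM i
  have hdouble : Summable fun x : ι × κ => ‖u x.1‖ * ‖b x.2 x.1‖ :=
    (summable_prod_of_nonneg hnonneg).2 ⟨fun i => (hb i).mul_left ‖u i‖, hcolumns⟩
  exact .of_norm_bounded hdouble.prod_symm fun x => norm_mul_le _ _

end NormedRing

section EvolutionProducts

variable {a : ℕ → ℕ → ℝ} {v w p q : l2}

lemma exists_isStarProd (ha : ∀ k i, 0 ≤ a k i) (hlf : GraphLocallyFinite a)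
    (hdeg : UnifBoundedDegree a) (v w : l2) : ∃ p, IsStarProd a v w p := by
  obtain ⟨M, -, hM⟩ := hdeg
  have habs : ∀ k i, ‖a k i‖ = a k i := fun k i => Real.norm_of_nonneg (ha k i)
  have hsum : Summable fun x : ℕ × ℕ => v x.2 * w x.2 * a x.1 x.2 := by
    refine summable_mul_of_tsum_norm_le (M := M) ?_ ?_
      (summable_norm_mul_of_holderConjugate (by simpa using Real.HolderConjugate.two_two) v w)
    · simpa only [habs] using! hlf
    · simpa only [habs] using! hM
  have hl1 : Memℓp (fun k => ∑' i, v i * w i * a k i) 1 :=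
    memℓp_gen (by simpa using hsum.prod.norm)
  exact ⟨⟨_, hl1.of_exponent_ge one_le_two⟩, hsum.prod_factor, fun k => rfl⟩

lemma deg_div_deg_le_one (a : ℕ → ℕ → ℝ) (i : ℕ) : deg (fun k i => a k i / deg a i) i ≤ 1 := by
  rw [deg, tsum_div_const]
  exact div_self_le_one (deg a i)

lemma exists_isRWProd (ha : ∀ k i, 0 ≤ a k i) (hlf : GraphLocallyFinite a) (v w : l2) :
    ∃ q, IsRWProd a v w q :=
  exists_isStarProd (a := fun k i => a k i / deg a i)
    (fun k i => div_nonneg (ha k i) (tsum_nonneg fun k => ha k i))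
    (fun i => (hlf i).div_const (deg a i)) ⟨1, one_pos, deg_div_deg_le_one a⟩ v w

lemma IsRWProd.unique (hp : IsRWProd a v w p) (hq : IsRWProd a v w q) : p = q := by
  ext k
  rw [hp.2 k, hq.2 k]

lemma IsStarProd.isRWProd_of_diagonal {c : ℕ → ℝ} {f : l2 → l2} (hf : ∀ v i, f v i = c i * v i)
    (hc : ∀ k i, c i ^ 2 * (a k i / deg a i) = c k * a k i) (hp : IsStarProd a v w p) :
    IsRWProd a (f v) (f w) (f p) := by
  have hterm : ∀ k i, f v i * f w i * (a k i / deg a i) = c k * (v i * w i * a k i) := by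
    intro k i
    rw [hf, hf]
    linear_combination v i * w i * hc k i
  constructor
  · intro k
    simpa only [hterm] using (hp.1 k).mul_left (c k)
  · intro k
    simp only [hterm]
    rw [hf, hp.2 k, tsum_mul_left]

end EvolutionProducts

section Biregular

lemma sq_cbrt_sq_mul_div {x y : ℝ} (hx : 0 < x) (hy : 0 ≤ y) :
    ((x ^ 2 * y) ^ ((1 : ℝ) / 3)) ^ 2 / x = (x * y ^ 2) ^ ((1 : ℝ) / 3) := by
  have hcube : (x ^ 3) ^ ((1 : ℝ) / 3) = x := by
    simpa using Real.pow_rpow_inv_natCast hx.le three_ne_zero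
  rw [div_eq_iff hx.ne']
  calc
    ((x ^ 2 * y) ^ ((1 : ℝ) / 3)) ^ 2 = ((x ^ 2 * y) ^ 2) ^ ((1 : ℝ) / 3) :=
      Real.rpow_pow_comm (by positivity) _ _
    _ = (x * y ^ 2 * x ^ 3) ^ ((1 : ℝ) / 3) := by ring_nf
    _ = (x * y ^ 2) ^ ((1 : ℝ) / 3) * x := by
      rw [Real.mul_rpow (by positivity) (by positivity), hcube]

open Classical in
/-- The diagonal entries of the isomorphism from `A(G)` to `A_RW(G)` for a `(d₁, d₂)`-biregular
graph `G` with one side `V₁`, the other side being the complement of `V₁`. -/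
def biregularScale {α : Type*} (V₁ : Set α) (d₁ d₂ : ℝ) (i : α) : ℝ :=
  if i ∈ V₁ then (d₁ ^ 2 * d₂) ^ ((1 : ℝ) / 3) else (d₁ * d₂ ^ 2) ^ ((1 : ℝ) / 3)

variable {α : Type*} {V₁ : Set α} {d₁ d₂ : ℝ} {i : α}

lemma biregularScale_of_mem (hi : i ∈ V₁) :
    biregularScale V₁ d₁ d₂ i = (d₁ ^ 2 * d₂) ^ ((1 : ℝ) / 3) :=
  if_pos hi

lemma biregularScale_of_notMem (hi : i ∉ V₁) :
    biregularScale V₁ d₁ d₂ i = (d₁ * d₂ ^ 2) ^ ((1 : ℝ) / 3) :=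
  if_neg hi

lemma biregularScale_pos (hd₁ : 0 < d₁) (hd₂ : 0 < d₂) (i : α) : 0 < biregularScale V₁ d₁ d₂ i := by
  unfold biregularScale
  split_ifs <;> positivity

lemma finite_range_biregularScale (V₁ : Set α) (d₁ d₂ : ℝ) :
    (Set.range (biregularScale V₁ d₁ d₂)).Finite :=
  by
  classical exact (Set.finite_range_const.union Set.finite_range_const).subset Set.range_ite_subset

lemma biregularScale_sq_mul_div_deg {a : ℕ → ℕ → ℝ} {V₁ : Set ℕ} (hd₁ : 0 < d₁) (hd₂ : 0 < d₂)
    (hdeg₁ : ∀ i ∈ V₁, deg a i = d₁) (hdeg₂ : ∀ i ∉ V₁, deg a i = d₂)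
    (hbip : ∀ i k, a k i ≠ 0 → ((i ∈ V₁ ∧ k ∉ V₁) ∨ (i ∉ V₁ ∧ k ∈ V₁))) (k i : ℕ) :
    biregularScale V₁ d₁ d₂ i ^ 2 * (a k i / deg a i) = biregularScale V₁ d₁ d₂ k * a k i := by
  obtain hki | hki := eq_or_ne (a k i) 0
  · rw [hki, zero_div, mul_zero, mul_zero]
  rw [mul_div_left_comm, mul_comm]
  congr 1
  obtain ⟨hi, hk⟩ | ⟨hi, hk⟩ := hbip i k hki
  · rw [biregularScale_of_mem hi, biregularScale_of_notMem hk, hdeg₁ i hi,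
      sq_cbrt_sq_mul_div hd₁ hd₂.le]
  · rw [biregularScale_of_notMem hi, biregularScale_of_mem hk, hdeg₂ i hi, mul_comm d₁,
      mul_comm (d₁ ^ 2), sq_cbrt_sq_mul_div hd₂ hd₁.le]

end Biregular

lemma SimpleAdj.nonneg {a : ℕ → ℕ → ℝ} (ha : SimpleAdj a) (k i : ℕ) : 0 ≤ a k i := by
  obtain h | h := ha.1 k i <;> simp [h]

theorem biregular_explicit_iso_general
    (a : ℕ → ℕ → ℝ) (V₁ : Set ℕ) (d₁ d₂ : ℝ)
    (ha : ∀ k i, 0 ≤ a k i) (hlf : GraphLocallyFinite a)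
    (hd₁ : 0 < d₁) (hd₂ : 0 < d₂)
    (hdeg₁ : ∀ i ∈ V₁, deg a i = d₁)
    (hdeg₂ : ∀ i ∉ V₁, deg a i = d₂)
    (hbip : ∀ i k, a k i ≠ 0 → ((i ∈ V₁ ∧ k ∉ V₁) ∨ (i ∉ V₁ ∧ k ∈ V₁))) :
    ∃ f : l2 ≃L[ℝ] l2,
      (∀ i ∈ V₁, f (delta i) = ((d₁ ^ 2 * d₂) ^ ((1 : ℝ) / 3)) • delta i) ∧
      (∀ i ∉ V₁, f (delta i) = ((d₁ * d₂ ^ 2) ^ ((1 : ℝ) / 3)) • delta i) ∧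
      (∀ v w : l2, ∃ p : l2, IsStarProd a v w p) ∧
      (∀ v w : l2, ∃ q : l2, IsRWProd a v w q) ∧
      (∀ v w p q : l2, IsStarProd a v w p → IsRWProd a (f v) (f w) q → f p = q) := by
  obtain ⟨c, hc⟩ := exists_units_lp_infty_coe_eq (finite_range_biregularScale V₁ d₁ d₂)
    fun i => (biregularScale_pos hd₁ hd₂ i).ne'
  have hf : ∀ (v : l2) i, lpDiagonalEquiv c v i = biregularScale V₁ d₁ d₂ i * v i :=
    fun v i => by rw [lpDiagonalEquiv_apply, hc, smul_eq_mul]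
  have hdelta : ∀ i, lpDiagonalEquiv c (delta i) = biregularScale V₁ d₁ d₂ i • delta i :=
    fun i => by rw [delta, lpDiagonalEquiv_single, hc]
  have hbdd : UnifBoundedDegree a := by
    refine ⟨max d₁ d₂, lt_max_of_lt_left hd₁, fun i => ?_⟩
    by_cases hi : i ∈ V₁
    · exact (hdeg₁ i hi).trans_le (le_max_left d₁ d₂)
    · exact (hdeg₂ i hi).trans_le (le_max_right d₁ d₂)
  have hscale := biregularScale_sq_mul_div_deg hd₁ hd₂ hdeg₁ hdeg₂ hbip
  refine ⟨lpDiagonalEquiv c, fun i hi => ?_, fun i hi => ?_, exists_isStarProd ha hlf hbdd,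
    exists_isRWProd ha hlf, fun v w p q hp hq => (hp.isRWProd_of_diagonal hf hscale).unique hq⟩
  · rw [hdelta, biregularScale_of_mem hi]
  · rw [hdelta, biregularScale_of_notMem hi]

/-- for a `(d₁,d₂)`-biregular graph on ℕ (with `d₁, d₂ ≥ 1`), the linear map
determined by `f(δ_i) = (d₁² d₂)^{1/3} δ_i` on `V₁` and `f(δ_i) = (d₁ d₂²)^{1/3} δ_i` on
`V₂` is an isomorphism of Hilbert evolution algebras from `A(G)` to `A_RW(G)`: a continuous
linear bijection with continuous inverse satisfying `f(v ⋆ w) = f(v) ∘ f(w)`. -/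
theorem biregular_explicit_iso
    (a : ℕ → ℕ → ℝ) (V₁ : Set ℕ) (d₁ d₂ : ℝ)
    (hadj : SimpleAdj a) (hlf : GraphLocallyFinite a)
    (hd₁ : 1 ≤ d₁) (hd₂ : 1 ≤ d₂)
    (hdeg₁ : ∀ i ∈ V₁, deg a i = d₁)
    (hdeg₂ : ∀ i ∉ V₁, deg a i = d₂)
    (hbip : ∀ i k, a k i = 1 → ((i ∈ V₁ ∧ k ∉ V₁) ∨ (i ∉ V₁ ∧ k ∈ V₁))) :
    ∃ f : l2 ≃L[ℝ] l2,
      (∀ i ∈ V₁, f (delta i) = ((d₁ ^ 2 * d₂) ^ ((1 : ℝ) / 3)) • delta i) ∧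
      (∀ i ∉ V₁, f (delta i) = ((d₁ * d₂ ^ 2) ^ ((1 : ℝ) / 3)) • delta i) ∧
      (∀ v w : l2, ∃ p : l2, IsStarProd a v w p) ∧
      (∀ v w : l2, ∃ q : l2, IsRWProd a v w q) ∧
      (∀ v w p q : l2, IsStarProd a v w p → IsRWProd a (f v) (f w) q → f p = q) :=
  biregular_explicit_iso_general a V₁ d₁ d₂ hadj.nonneg hlf (one_pos.trans_le hd₁)
    (one_pos.trans_le hd₂) hdeg₁ hdeg₂ fun i k h => hbip i k ((hadj.1 k i).resolve_left h)
end
end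

section
/- Let G be a connected graph on ℕ with uniformly bounded degree and deg(i) ≥ 1 for all i, and let f be an isomorphism of Hilbert evolution algebras from A_RW(G) to A(G) of the form f(δ_i) = α_i δ_{π(i)} with α_i ≠ 0 and π : ℕ → ℕ a bijection. Define the twisted structure constants c̃_{ki} = (α_k / α_i²) · (a_{ki}/deg(i)) and the corresponding product (v ·̃ w)_k = ∑_i v_i w_i c̃_{ki} on ℓ²(ℕ). Then the linear isometric equivalence U : ℓ²(ℕ) → ℓ²(ℕ) determined by U(δ_i) = δ_{π(i)} is a unitary isomorphism of Hilbert evolution algebras from (ℓ²(ℕ), ·̃) onto A(G): U is a surjective linear isometry and U(v ·̃ w) = U(v) ⋆ U(w) for all v, w ∈ ℓ²(ℕ). -/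
/-! The element `δ_i²` of an evolution algebra is the `i`-th column of its structure matrix, so
applying the isomorphism to `δ_i ∘ δ_i` and comparing coordinates gives
`α_k a_{ki} / deg(i) = α_i² a_{π(k) π(i)}`, that is, `c̃_{ki} = a_{π(k) π(i)}`. The twisted algebra
is thus `A(G)` with its basis relabelled by `π`, and relabelling is a unitary isomorphism.

Products exist in `A(G)`, hence in the twisted algebra: `v w` is in `ℓ¹` and the columns of the
adjacency matrix are bounded in `ℓ²` by the uniform degree bound, so `∑_i v_i w_i δ_i²` converges
absolutely. -/

noncomputable section
open scoped ENNReal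

/-- `p` is the product `v ·̃ w` on ℓ²(ℕ) with the twisted structure constants
`c̃_{ki} = (α_k/α_i²)·(a_{ki}/deg(i))`: `p_k = ∑_i v_i w_i c̃_{ki}`. -/
def IsTildeProd (a : ℕ → ℕ → ℝ) (α : ℕ → ℝ) (v w p : l2) : Prop :=
  (∀ k, Summable fun i => v i * w i * (α k / α i ^ 2 * (a k i / deg a i))) ∧
  ∀ k, p k = ∑' i, v i * w i * (α k / α i ^ 2 * (a k i / deg a i))

open scoped lp

section LpMaps

variable {ι κ 𝕜 E : Type*} {p : ℝ≥0∞}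

lemma memℓp_comp_equiv_iff [NormedAddCommGroup E] {f : κ → E} (e : ι ≃ κ) :
    Memℓp (f ∘ e) p ↔ Memℓp f p := by
  rcases p.trichotomy with rfl | rfl | hp
  · rw [memℓp_zero_iff, memℓp_zero_iff]
    change (e ⁻¹' {i | f i ≠ 0}).Finite ↔ _
    exact ⟨fun h => h.of_preimage e.surjective, fun h => h.preimage e.injective.injOn⟩
  · rw [memℓp_infty_iff, memℓp_infty_iff, ← e.surjective.range_comp (fun i => ‖f i‖)]
    rfl
  · rw [memℓp_gen_iff hp, memℓp_gen_iff hp, ← e.summable_iff]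
    rfl

variable (𝕜 E p) in
/-- The isometric equivalence of `ℓᵖ` spaces that relabels coordinates along a bijection `e` of the
index sets, `v ↦ v ∘ e⁻¹`; it sends `δ_i` to `δ_{e(i)}`. -/
def lpCongrLeft [NormedRing 𝕜] [NormedAddCommGroup E] [Module 𝕜 E] [IsBoundedSMul 𝕜 E]
    [Fact (1 ≤ p)] (e : ι ≃ κ) : ℓ^p(ι, E) ≃ₗᵢ[𝕜] ℓ^p(κ, E) where
  toFun v := ⟨v ∘ e.symm, (memℓp_comp_equiv_iff e.symm).2 (lp.memℓp v)⟩
  invFun v := ⟨v ∘ e, (memℓp_comp_equiv_iff e).2 (lp.memℓp v)⟩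
  left_inv v := by ext i; simp
  right_inv v := by ext k; simp
  map_add' v w := rfl
  map_smul' r v := rfl
  norm_map' v := by
    rcases p.trichotomy with rfl | rfl | hp
    · exact absurd (Fact.out : (1 : ℝ≥0∞) ≤ 0) (by simp)
    · rw [lp.norm_eq_ciSup, lp.norm_eq_ciSup]
      exact e.symm.iSup_comp (g := fun i => ‖v i‖)
    · rw [lp.norm_eq_tsum_rpow hp, lp.norm_eq_tsum_rpow hp]
      congr 1
      exact e.symm.tsum_eq fun i => ‖v i‖ ^ p.toReal

section Apply

variable [NormedRing 𝕜] [NormedAddCommGroup E] [Module 𝕜 E] [IsBoundedSMul 𝕜 E] [Fact (1 ≤ p)]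

lemma lpCongrLeft_apply_apply (e : ι ≃ κ) (v : ℓ^p(ι, E)) (i : ι) :
    lpCongrLeft 𝕜 E p e v (e i) = v i :=
  congrArg v (e.symm_apply_apply i)

lemma lpCongrLeft_single [DecidableEq ι] [DecidableEq κ] (e : ι ≃ κ) (i : ι) (x : E) :
    lpCongrLeft 𝕜 E p e (lp.single p i x) = lp.single p (e i) x := by
  ext k
  obtain ⟨j, rfl⟩ := e.surjective k
  simp [lpCongrLeft_apply_apply, Pi.single_apply]

end Apply

lemma map_apply_of_map_single_one [NormedField 𝕜] [DecidableEq ι] [DecidableEq κ]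
    [Fact (1 ≤ p)] (hp : p ≠ ∞) (T : ℓ^p(ι, 𝕜) →L[𝕜] ℓ^p(κ, 𝕜)) {e : ι → κ}
    (he : e.Injective) {α : ι → 𝕜}
    (hT : ∀ i, T (lp.single p i 1) = α i • lp.single p (e i) 1) (v : ℓ^p(ι, 𝕜)) (k : ι) :
    T v (e k) = α k * v k := by
  have hcoord : (lp.evalCLM 𝕜 (fun _ : κ => 𝕜) p (e k)).comp T =
      α k • lp.evalCLM 𝕜 (fun _ : ι => 𝕜) p k := by
    refine lp.ext_continuousLinearMap hp fun i => ?_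
    ext
    change T (lp.single p i 1) (e k) = α k * (lp.single p i 1 : ℓ^p(ι, 𝕜)) k
    rw [hT, lp.coeFn_smul, Pi.smul_apply, lp.single_apply, lp.single_apply, smul_eq_mul]
    obtain rfl | hik := eq_or_ne k i
    · simp
    · simp [hik, he.ne hik]
  exact DFunLike.congr_fun hcoord v

end LpMaps

section EvolutionAlgebra

/-- `p` is the product of `v` and `w` in the evolution algebra with structure constants `c`, in
which `δ_i δ_i = ∑_k c_{ki} δ_k` and `δ_i δ_j = 0` for `i ≠ j`. As in `IsStarProd`, convergence of
the coordinate series is part of the definition. -/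
def IsEvolutionProd {ι R : Type*} [Mul R] [AddCommMonoid R] [TopologicalSpace R]
    (c : ι → ι → R) (v w p : ι → R) : Prop :=
  (∀ k, Summable fun i => v i * w i * c k i) ∧ ∀ k, p k = ∑' i, v i * w i * c k i

variable {ι κ 𝕜 : Type*}

lemma isEvolutionProd_iff_hasSum {R : Type*} [Mul R] [AddCommMonoid R] [TopologicalSpace R]
    [T2Space R] {c : ι → ι → R} {v w p : ι → R} :
    IsEvolutionProd c v w p ↔ ∀ k, HasSum (fun i => v i * w i * c k i) (p k) :=
  ⟨fun h k => h.2 k ▸ (h.1 k).hasSum,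
    fun h => ⟨fun k => (h k).summable, fun k => (h k).tsum_eq.symm⟩⟩

lemma IsEvolutionProd.unique {R : Type*} [Mul R] [AddCommMonoid R] [TopologicalSpace R]
    {c : ι → ι → R} {v w p q : ι → R} (hp : IsEvolutionProd c v w p)
    (hq : IsEvolutionProd c v w q) : p = q :=
  funext fun k => (hp.2 k).trans (hq.2 k).symm

lemma isEvolutionProd_single [DecidableEq ι] {R : Type*} [NonUnitalNonAssocSemiring R]
    [TopologicalSpace R] [T2Space R] {c : ι → ι → R} {i : ι} {r s : R} {p : ι → R} :
    IsEvolutionProd c (Pi.single i r) (Pi.single i s) p ↔ ∀ k, p k = r * s * c k i := by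
  have hterm (k : ι) : HasSum (fun j => (Pi.single i r : ι → R) j * (Pi.single i s : ι → R) j *
      c k j) (r * s * c k i) := by
    simpa using hasSum_single i fun j hj =>
      show (Pi.single i r : ι → R) j * (Pi.single i s : ι → R) j * c k j = 0 by simp [hj]
  rw [isEvolutionProd_iff_hasSum]
  exact forall_congr' fun k => ⟨fun h => h.unique (hterm k), fun h => h ▸ hterm k⟩

variable [NormedField 𝕜]

/-- `T` is multiplicative between the evolution algebras on `ℓᵖ` with structure constants `c` and
`b`. As products are partially defined, this only constrains those pairs `v`, `w` for which both
products exist. -/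
def IsEvolutionHom {p : ℝ≥0∞} (c : ι → ι → 𝕜) (b : κ → κ → 𝕜) (T : ℓ^p(ι, 𝕜) → ℓ^p(κ, 𝕜)) :
    Prop :=
  ∀ (v w u : ℓ^p(ι, 𝕜)) (x : ℓ^p(κ, 𝕜)),
    IsEvolutionProd c v w u → IsEvolutionProd b (T v) (T w) x → T u = x

lemma isEvolutionProd_lpCongrLeft {p : ℝ≥0∞} [Fact (1 ≤ p)] (e : ι ≃ κ) (c : κ → κ → 𝕜)
    {v w u : ℓ^p(ι, 𝕜)} :
    IsEvolutionProd c (lpCongrLeft 𝕜 𝕜 p e v) (lpCongrLeft 𝕜 𝕜 p e w) (lpCongrLeft 𝕜 𝕜 p e u) ↔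
      IsEvolutionProd (fun k i => c (e k) (e i)) v w u := by
  simp only [isEvolutionProd_iff_hasSum, ← e.forall_congr_right, ← e.hasSum_iff,
    Function.comp_def, lpCongrLeft_apply_apply]

lemma exists_isEvolutionProd [CompleteSpace 𝕜] {p : ℝ≥0∞} [Fact (1 ≤ p)] {C : ι → ℓ^p(ι, 𝕜)}
    (hC : ∃ M, ∀ i, ‖C i‖ ≤ M) {v w : ι → 𝕜} (hvw : Summable fun i => ‖v i‖ * ‖w i‖) :
    ∃ u : ℓ^p(ι, 𝕜), IsEvolutionProd (fun k i => C i k) v w u := by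
  obtain ⟨M, hM⟩ := hC
  have hsum : Summable fun i => (v i * w i) • C i :=
    Summable.of_norm_bounded (hvw.mul_right M) fun i => by
      rw [norm_smul, norm_mul]
      gcongr
      exact hM i
  exact ⟨∑' i, (v i * w i) • C i, isEvolutionProd_iff_hasSum.2 fun k =>
    hsum.hasSum.mapL (lp.evalCLM 𝕜 (fun _ : ι => 𝕜) p k)⟩

variable [DecidableEq ι] [DecidableEq κ]

lemma IsEvolutionHom.mul_coeff_eq {p : ℝ≥0∞} [Fact (1 ≤ p)] {C : ι → ℓ^p(ι, 𝕜)}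
    {B : κ → ℓ^p(κ, 𝕜)} {T : ℓ^p(ι, 𝕜) →L[𝕜] ℓ^p(κ, 𝕜)} {e : ι → κ} {α : ι → 𝕜}
    (hT : IsEvolutionHom (fun k i => C i k) (fun k i => B i k) T) (hp : p ≠ ∞)
    (he : e.Injective) (hTδ : ∀ i, T (lp.single p i 1) = α i • lp.single p (e i) 1) (k i : ι) :
    α k * C i k = α i ^ 2 * B (e i) (e k) := by
  have hsource : IsEvolutionProd (fun k i => C i k) (lp.single p i (1 : 𝕜))
      (lp.single p i (1 : 𝕜)) (C i) :=
    isEvolutionProd_single.2 fun k => by simp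
  have htarget : IsEvolutionProd (fun k i => B i k) (T (lp.single p i 1)) (T (lp.single p i 1))
      (α i ^ 2 • B (e i)) := by
    rw [hTδ, ← lp.single_smul, smul_eq_mul, mul_one]
    exact isEvolutionProd_single.2 fun k => by simp [sq]
  calc α k * C i k = T (C i) (e k) := (map_apply_of_map_single_one hp T he hTδ (C i) k).symm
    _ = α i ^ 2 * B (e i) (e k) := by rw [hT _ _ _ (α i ^ 2 • B (e i)) hsource htarget]; rfl

theorem twisted_unitary_iso_general [CompleteSpace 𝕜] (C : ι → ℓ²(ι, 𝕜)) (B : κ → ℓ²(κ, 𝕜))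
    (hB : ∃ M, ∀ j, ‖B j‖ ≤ M) (T : ℓ²(ι, 𝕜) →L[𝕜] ℓ²(κ, 𝕜)) (e : ι ≃ κ) (α : ι → 𝕜)
    (hα : ∀ i, α i ≠ 0) (hTδ : ∀ i, T (lp.single 2 i 1) = α i • lp.single 2 (e i) 1)
    (hT : IsEvolutionHom (fun k i => C i k) (fun k i => B i k) T) :
    ∃ U : ℓ²(ι, 𝕜) ≃ₗᵢ[𝕜] ℓ²(κ, 𝕜),
      (∀ i, U (lp.single 2 i 1) = lp.single 2 (e i) 1) ∧
      (∀ v w : ℓ²(ι, 𝕜), ∃ p : ℓ²(ι, 𝕜),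
        IsEvolutionProd (fun k i => α k / α i ^ 2 * C i k) v w p) ∧
      IsEvolutionHom (fun k i => α k / α i ^ 2 * C i k) (fun k i => B i k) U := by
  have htwist : (fun k i => α k / α i ^ 2 * C i k) = fun k i => B (e i) (e k) := by
    ext k i
    rw [div_mul_eq_mul_div, div_eq_iff (pow_ne_zero 2 (hα i)), mul_comm (B _ _)]
    exact hT.mul_coeff_eq ENNReal.ofNat_ne_top e.injective hTδ k i
  let U := lpCongrLeft 𝕜 𝕜 2 e
  have hrelabel (v w p : ℓ²(ι, 𝕜)) : IsEvolutionProd (fun k i => B i k) (U v) (U w) (U p) ↔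
      IsEvolutionProd (fun k i => α k / α i ^ 2 * C i k) v w p := by
    rw [htwist]
    exact isEvolutionProd_lpCongrLeft e _
  refine ⟨U, fun i => lpCongrLeft_single e i 1, fun v w => ?_, fun v w p q hp hq => ?_⟩
  · have hvw : Summable fun k => ‖U v k‖ * ‖U w k‖ :=
      lp.summable_mul (by norm_num [Real.holderConjugate_iff]) (U v) (U w)
    obtain ⟨q, hq⟩ := exists_isEvolutionProd hB hvw
    refine ⟨U.symm q, (hrelabel v w _).1 ?_⟩
    rwa [U.apply_symm_apply]
  · exact lp.ext (((hrelabel v w p).2 hp).unique hq)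

end EvolutionAlgebra

section AdjacencyColumns

variable {a : ℕ → ℕ → ℝ}

lemma SimpleAdj.sq_eq (hadj : SimpleAdj a) (k i : ℕ) : a k i ^ 2 = a k i := by
  rcases hadj.1 k i with h | h <;> simp [h]

lemma SimpleAdj.memℓp_column (hadj : SimpleAdj a) (hlf : GraphLocallyFinite a) (i : ℕ) :
    Memℓp (fun k => a k i) 2 :=
  memℓp_gen (by simpa [hadj.sq_eq] using hlf i)

/-- The `i`-th column `δ_i ⋆ δ_i` of the adjacency matrix, as an element of `ℓ²(ℕ)`. -/
def adjColumn (hadj : SimpleAdj a) (hlf : GraphLocallyFinite a) (i : ℕ) : l2 :=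
  ⟨fun k => a k i, hadj.memℓp_column hlf i⟩

/-- The `i`-th column `δ_i ∘ δ_i` of the transition matrix of the random walk, as an element of
`ℓ²(ℕ)`. -/
def rwColumn (hadj : SimpleAdj a) (hlf : GraphLocallyFinite a) (i : ℕ) : l2 :=
  ⟨fun k => a k i / deg a i, show Memℓp (fun k => a k i / deg a i) 2 by
    simpa only [div_eq_inv_mul] using (hadj.memℓp_column hlf i).const_mul (deg a i)⁻¹⟩

lemma norm_sq_adjColumn (hadj : SimpleAdj a) (hlf : GraphLocallyFinite a) (i : ℕ) :
    ‖adjColumn hadj hlf i‖ ^ 2 = deg a i := by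
  have hnorm := lp.norm_rpow_eq_tsum (p := 2) (by norm_num) (adjColumn hadj hlf i)
  simp only [ENNReal.toReal_ofNat, Real.rpow_ofNat, Real.norm_eq_abs, sq_abs] at hnorm
  exact hnorm.trans (tsum_congr fun k => hadj.sq_eq k i)

lemma UnifBoundedDegree.exists_norm_adjColumn_le (hubd : UnifBoundedDegree a)
    (hadj : SimpleAdj a) (hlf : GraphLocallyFinite a) :
    ∃ M, ∀ i, ‖adjColumn hadj hlf i‖ ≤ M := by
  obtain ⟨M, -, hM⟩ := hubd
  exact ⟨√M, fun i => Real.le_sqrt_of_sq_le ((norm_sq_adjColumn hadj hlf i).trans_le (hM i))⟩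

end AdjacencyColumns

/-- given an isomorphism `f(δ_i) = α_i δ_{π(i)}` of Hilbert evolution
algebras from `A_RW(G)` to `A(G)`, the linear isometric equivalence `U` determined by
`U(δ_i) = δ_{π(i)}` is a unitary isomorphism of Hilbert evolution algebras from ℓ²(ℕ)
with the twisted product `·̃` onto `A(G)`: `U(v ·̃ w) = U(v) ⋆ U(w)` for all `v, w`. -/
theorem twisted_unitary_iso
    (a : ℕ → ℕ → ℝ)
    (hadj : SimpleAdj a) (hconn : Connected a)
    (hlf : GraphLocallyFinite a) (hubd : UnifBoundedDegree a)
    (hdeg : ∀ i, 1 ≤ deg a i)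
    (f : l2 ≃L[ℝ] l2) (π : Equiv.Perm ℕ) (α : ℕ → ℝ)
    (hα : ∀ i, α i ≠ 0)
    (hfδ : ∀ i, f (delta i) = α i • delta (π i))
    (hf : ∀ v w p q : l2, IsRWProd a v w p → IsStarProd a (f v) (f w) q → f p = q) :
    ∃ U : l2 ≃ₗᵢ[ℝ] l2,
      (∀ i, U (delta i) = delta (π i)) ∧
      (∀ v w : l2, ∃ p : l2, IsTildeProd a α v w p) ∧
      (∀ v w p q : l2, IsTildeProd a α v w p → IsStarProd a (U v) (U w) q → U p = q) :=
  twisted_unitary_iso_general (rwColumn hadj hlf) (adjColumn hadj hlf)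
    (hubd.exists_norm_adjColumn_le hadj hlf) f π α hα hfδ hf
end
end
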